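/- Assume the diagonal entries of the arrow matrix A are ordered d₁ ≤ d₂ ≤ … ≤ d_{n−1}. Define the interval 𝓘 = (0, +∞) if all the d_i are equal, and 𝓘 = (0, μ₀) with μ₀ = (1/2)·min{|d_i − d_j| : d_i ≠ d_j} otherwise. Fix ε ∈ 𝓘 and let λ₁ ≤ … ≤ λₙ denote the eigenvalues of A in nondecreasing order. If 𝐚 ≥ (1/ε)·Σ_{i=1}^{n−1}|a_i|² + (n−1)·Σ_{i=1}^{n−1}|d_i| + (n−2)ε, then |d_α − λ_α| < ε for every 1 ≤ α ≤ n−1, and 0 ≤ λₙ − 𝐚 < (n−1)ε. -/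

import Mathlib

open Filter

/-- The `(n+1) × (n+1)` Hermitian "arrow" matrix with diagonal `d₁, …, dₙ, 𝐚`, last column
`a₁, …, aₙ` and last row `conj a₁, …, conj aₙ`. -/
noncomputable def arrowMatrix {n : ℕ} (d : Fin n → ℝ) (a : Fin n → ℂ) (aa : ℝ) :
    Matrix (Fin (n + 1)) (Fin (n + 1)) ℂ :=
  Matrix.of fun i j =>
    Fin.lastCases
      (Fin.lastCases ((aa : ℂ)) (fun β => (starRingEnd ℂ) (a β)) j)
      (fun α => Fin.lastCases (a α) (fun β => if α = β then (d α : ℂ) else 0) j)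
      i

open Matrix in
lemma key_exists {N : ℕ} {A : Matrix (Fin N) (Fin N) ℂ} (hA : A.IsHermitian)
    (lam : Fin N → ℝ) (e : Equiv.Perm (Fin N)) (he : ∀ k, lam k = hA.eigenvalues (e k))
    (S T : Finset (Fin N)) (hST : N < S.card + T.card) :
    ∃ (v : Fin N → ℂ) (w : Fin N → ℝ), v ≠ 0 ∧ (∀ j, j ∉ T → v j = 0) ∧ (∀ k, 0 ≤ w k) ∧
      (∀ k, k ∉ S → w k = 0) ∧ (∑ j, ‖v j‖ ^ 2 = ∑ k, w k) ∧
      (star v ⬝ᵥ (A *ᵥ v)).re = ∑ k, lam k * w k := by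
  classical
  set U : Matrix (Fin N) (Fin N) ℂ := (hA.eigenvectorUnitary : Matrix (Fin N) (Fin N) ℂ) with hU
  have hUU : Uᴴ * U = 1 := by
    have := (hA.eigenvectorUnitary).2
    exact (Matrix.mem_unitaryGroup_iff'.1 this)
  have hAU : A * U = U * diagonal (fun i => (hA.eigenvalues i : ℂ)) := by
    have h := hA.spectral_theorem
    rw [Unitary.conjStarAlgAut_apply] at h
    conv_lhs => rw [h]
    rw [Matrix.mul_assoc]
    change _ * (Uᴴ * U) = _
    rw [hUU, Matrix.mul_one]
    rfl
  -- the linear map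
  let L : (S → ℂ) →ₗ[ℂ] ({j // j ∉ T} → ℂ) :=
    Matrix.toLin' (Matrix.of fun (j : {j // j ∉ T}) (k : S) => U j.1 (e k.1))
  have hker : LinearMap.ker L ≠ ⊥ := by
    apply LinearMap.ker_ne_bot_of_finrank_lt
    simp only [Module.finrank_fintype_fun_eq_card, Fintype.card_coe, Fintype.card_subtype_compl,
      Fintype.card_fin]
    have : T.card ≤ N := by simpa using T.card_le_univ
    omega
  obtain ⟨c, hc, hc0⟩ := (Submodule.ne_bot_iff _).1 hker
  let y : Fin N → ℂ := fun k => if h : k ∈ S then c ⟨k, h⟩ else 0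
  let x : Fin N → ℂ := fun i => y (e.symm i)
  have hyS : ∀ k, k ∉ S → y k = 0 := fun k hk => by simp [y, hk]
  have hx0 : x ≠ 0 := by
    intro hx
    apply hc0
    funext k
    have := congrFun hx (e k.1)
    simpa [x, y] using this
  have hnorm : star (U *ᵥ x) ⬝ᵥ (U *ᵥ x) = star x ⬝ᵥ x := by
    rw [star_mulVec, ← dotProduct_mulVec, mulVec_mulVec, hUU, one_mulVec]
  refine ⟨U *ᵥ x, fun k => ‖y k‖ ^ 2, ?_, ?_, fun k => by positivity, ?_, ?_, ?_⟩
  · intro h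
    apply hx0
    have : Uᴴ *ᵥ (U *ᵥ x) = x := by rw [mulVec_mulVec, hUU, one_mulVec]
    rw [← this, h, mulVec_zero]
  · intro j hj
    have h1 := congrFun (LinearMap.mem_ker.1 hc) ⟨j, hj⟩
    simp only [L, Matrix.toLin'_apply, mulVec, dotProduct, Matrix.of_apply, Pi.zero_apply] at h1
    rw [← h1]
    simp only [mulVec, dotProduct]
    rw [← Equiv.sum_comp e]
    simp only [x, Equiv.symm_apply_apply]
    rw [← Finset.sum_subset (Finset.subset_univ S) (fun k _ hk => by simp [hyS k hk])]
    rw [← Finset.sum_coe_sort]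
    apply Finset.sum_congr rfl
    intro k _
    simp [y]
  · intro k hk
    simp [hyS k hk]
  · have h2 : ∀ z : Fin N → ℂ, star z ⬝ᵥ z = ((∑ j, ‖z j‖ ^ 2 : ℝ) : ℂ) := by
      intro z
      simp [dotProduct, Complex.conj_mul']
    rw [h2, h2] at hnorm
    have := Complex.ofReal_injective hnorm
    rw [this, ← Equiv.sum_comp e]
    simp [x]
  · have h3 : star (U *ᵥ x) ⬝ᵥ (A *ᵥ (U *ᵥ x)) =
        star x ⬝ᵥ (diagonal (fun i => (hA.eigenvalues i : ℂ)) *ᵥ x) := by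
      rw [mulVec_mulVec, hAU, star_mulVec, ← dotProduct_mulVec, mulVec_mulVec, ← Matrix.mul_assoc,
        hUU, Matrix.one_mul]
    rw [h3]
    simp only [dotProduct, mulVec_diagonal, Pi.star_apply, Complex.re_sum]
    rw [← Equiv.sum_comp e]
    apply Finset.sum_congr rfl
    intro k _
    simp only [x, Equiv.symm_apply_apply, he]
    have : star (y k) * ((hA.eigenvalues (e k) : ℂ) * y k) =
        ((hA.eigenvalues (e k) * ‖y k‖ ^ 2 : ℝ) : ℂ) := by
      push_cast
      rw [← Complex.conj_mul']
      simp only [RCLike.star_def]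
      ring
    rw [this, Complex.ofReal_re]

open Matrix in
lemma arrow_form {n : ℕ} (d : Fin n → ℝ) (a : Fin n → ℂ) (aa : ℝ) (v : Fin (n + 1) → ℂ) :
    (star v ⬝ᵥ (arrowMatrix d a aa *ᵥ v)).re =
      ∑ i : Fin n, (d i * ‖v i.castSucc‖ ^ 2
        + 2 * (star (v i.castSucc) * a i * v (Fin.last n)).re) + aa * ‖v (Fin.last n)‖ ^ 2 := by
  simp only [dotProduct, mulVec, Fin.sum_univ_castSucc, arrowMatrix, Matrix.of_apply,
    Fin.lastCases_castSucc, Fin.lastCases_last, Pi.star_apply, ite_mul, zero_mul,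
    Finset.sum_ite_eq, Finset.mem_univ, if_true]
  simp only [Complex.add_re, Complex.re_sum, mul_add, Finset.mul_sum, Finset.sum_add_distrib]
  have e1 : ∀ i : Fin n, (star (v i.castSucc) * ((d i : ℂ) * v i.castSucc)).re
      = d i * ‖v i.castSucc‖ ^ 2 := by
    intro i
    rw [← Complex.normSq_eq_norm_sq, Complex.normSq_apply]
    simp
    ring
  have e2 : (star (v (Fin.last n)) * ((aa : ℂ) * v (Fin.last n))).re
      = aa * ‖v (Fin.last n)‖ ^ 2 := by
    rw [← Complex.normSq_eq_norm_sq, Complex.normSq_apply]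
    simp
    ring
  have e3 : ∀ i : Fin n, (star (v (Fin.last n)) * ((starRingEnd ℂ) (a i) * v i.castSucc)).re
      = (star (v i.castSucc) * (a i * v (Fin.last n))).re := by
    intro i
    simp
    ring
  have e4 : ∀ i : Fin n, 2 * (star (v i.castSucc) * a i * v (Fin.last n)).re
      = (star (v i.castSucc) * (a i * v (Fin.last n))).re
        + (star (v i.castSucc) * (a i * v (Fin.last n))).re := by
    intro i
    rw [mul_assoc]; ring
  simp only [e1, e2, e3, e4, Finset.sum_add_distrib]
  ring

lemma arrow_trace {n : ℕ} (d : Fin n → ℝ) (a : Fin n → ℂ) (aa : ℝ)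
    (hA : (arrowMatrix d a aa).IsHermitian)
    (lam : Fin (n + 1) → ℝ) (e : Equiv.Perm (Fin (n + 1)))
    (he : ∀ k, lam k = hA.eigenvalues (e k)) :
    ∑ k, lam k = ∑ i, d i + aa := by
  have h := hA.trace_eq_sum_eigenvalues
  have h2 : (arrowMatrix d a aa).trace = ((∑ i, d i + aa : ℝ) : ℂ) := by
    simp [Matrix.trace, Fin.sum_univ_castSucc, arrowMatrix]
  rw [h2] at h
  have h3 : ∑ i, d i + aa = ∑ i, hA.eigenvalues i := by
    apply Complex.ofReal_injective
    rw [h]; push_cast; rfl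
  rw [h3, ← Equiv.sum_comp e hA.eigenvalues]
  simp [he]

lemma arrow_upper {n : ℕ} (d : Fin n → ℝ) (a : Fin n → ℂ) (aa : ℝ)
    (hd : Monotone d) (hA : (arrowMatrix d a aa).IsHermitian)
    (lam : Fin (n + 1) → ℝ) (hmono : Monotone lam) (e : Equiv.Perm (Fin (n + 1)))
    (he : ∀ k, lam k = hA.eigenvalues (e k)) (α : Fin n) :
    lam α.castSucc ≤ d α := by
  obtain ⟨v, w, hv0, hvT, hw, hwS, hsum, hform⟩ := key_exists hA lam e he
    (Finset.Ici α.castSucc) (Finset.Iic α.castSucc) (by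
      rw [Fin.card_Ici, Fin.card_Iic]
      simp only [Fin.val_castSucc]
      omega)
  have hlast : v (Fin.last n) = 0 := hvT _ (by simp [Fin.castSucc_lt_last])
  have hpos : 0 < ∑ j, ‖v j‖ ^ 2 := by
    obtain ⟨j, hj⟩ := Function.ne_iff.1 hv0
    refine Finset.sum_pos' (fun _ _ => by positivity) ⟨j, Finset.mem_univ _, ?_⟩
    have : 0 < ‖v j‖ := norm_pos_iff.2 hj
    positivity
  rw [arrow_form] at hform
  have h1 : ∑ k, lam α.castSucc * w k ≤ ∑ k, lam k * w k := by
    apply Finset.sum_le_sum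
    intro k _
    by_cases hk : α.castSucc ≤ k
    · exact mul_le_mul_of_nonneg_right (hmono hk) (hw k)
    · rw [hwS k (by simpa using hk)]; simp
  have h2 : ∑ i : Fin n, (d i * ‖v i.castSucc‖ ^ 2
        + 2 * (star (v i.castSucc) * a i * v (Fin.last n)).re) + aa * ‖v (Fin.last n)‖ ^ 2
      ≤ d α * ∑ j, ‖v j‖ ^ 2 := by
    rw [Fin.sum_univ_castSucc, hlast]
    simp only [mul_zero, Complex.zero_re, add_zero, norm_zero, ne_eq, OfNat.ofNat_ne_zero,
      not_false_eq_true, zero_pow]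
    rw [Finset.mul_sum]
    apply Finset.sum_le_sum
    intro i _
    by_cases hi : i ≤ α
    · exact mul_le_mul_of_nonneg_right (hd hi) (by positivity)
    · rw [hvT i.castSucc (by simpa using hi)]; simp
  rw [← Finset.mul_sum, ← hform, ← hsum] at h1
  exact le_of_mul_le_mul_right (h1.trans h2) hpos

lemma arrow_lower {n : ℕ} (hn : 1 ≤ n) (d : Fin n → ℝ) (a : Fin n → ℂ) (aa : ℝ)
    (hd : Monotone d) (hA : (arrowMatrix d a aa).IsHermitian)
    (lam : Fin (n + 1) → ℝ) (hmono : Monotone lam) (e : Equiv.Perm (Fin (n + 1)))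
    (he : ∀ k, lam k = hA.eigenvalues (e k)) (ε : ℝ) (hε : 0 < ε) (α : Fin n)
    (hg : 0 < aa - d α + ε - (1 / ε) * ∑ i, ‖a i‖ ^ 2) :
    d α - ε < lam α.castSucc := by
  obtain ⟨v, w, hv0, hvT, hw, hwS, hsum, hform⟩ := key_exists hA lam e he
    (Finset.Iic α.castSucc) (Finset.Ici α.castSucc) (by
      rw [Fin.card_Ici, Fin.card_Iic]
      simp only [Fin.val_castSucc]
      omega)
  have hpos : 0 < ∑ j, ‖v j‖ ^ 2 := by
    obtain ⟨j, hj⟩ := Function.ne_iff.1 hv0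
    refine Finset.sum_pos' (fun _ _ => by positivity) ⟨j, Finset.mem_univ _, ?_⟩
    have : 0 < ‖v j‖ := norm_pos_iff.2 hj
    positivity
  rw [arrow_form] at hform
  have h1 : ∑ k, lam k * w k ≤ ∑ k, lam α.castSucc * w k := by
    apply Finset.sum_le_sum
    intro k _
    by_cases hk : k ≤ α.castSucc
    · exact mul_le_mul_of_nonneg_right (hmono hk) (hw k)
    · rw [hwS k (by simpa using hk)]; simp
  rw [← Finset.mul_sum, ← hform, ← hsum] at h1
  by_cases hlast : v (Fin.last n) = 0
  · have h2 : d α * ∑ j, ‖v j‖ ^ 2 ≤ ∑ i : Fin n, (d i * ‖v i.castSucc‖ ^ 2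
        + 2 * (star (v i.castSucc) * a i * v (Fin.last n)).re) + aa * ‖v (Fin.last n)‖ ^ 2 := by
      rw [Fin.sum_univ_castSucc, hlast]
      simp only [mul_zero, Complex.zero_re, add_zero, norm_zero, ne_eq, OfNat.ofNat_ne_zero,
        not_false_eq_true, zero_pow]
      rw [Finset.mul_sum]
      apply Finset.sum_le_sum
      intro i _
      by_cases hi : α ≤ i
      · exact mul_le_mul_of_nonneg_right (hd hi) (by positivity)
      · rw [hvT i.castSucc (by simpa using hi)]; simp
    have := le_of_mul_le_mul_right (h2.trans h1) hpos
    linarith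
  · have hl : 0 < ‖v (Fin.last n)‖ ^ 2 := by
      have := norm_pos_iff.2 hlast
      positivity
    have h2 : ∑ i : Fin n, ((d α - ε) * ‖v i.castSucc‖ ^ 2
          - (1 / ε * ‖a i‖ ^ 2) * ‖v (Fin.last n)‖ ^ 2) ≤
        ∑ i : Fin n, (d i * ‖v i.castSucc‖ ^ 2
        + 2 * (star (v i.castSucc) * a i * v (Fin.last n)).re) := by
      apply Finset.sum_le_sum
      intro i _
      have h3 : -(‖v i.castSucc‖ * ‖a i‖ * ‖v (Fin.last n)‖)
          ≤ (star (v i.castSucc) * a i * v (Fin.last n)).re := by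
        have := Complex.abs_re_le_norm (star (v i.castSucc) * a i * v (Fin.last n))
        rw [norm_mul, norm_mul, norm_star] at this
        exact (abs_le.1 this).1
      have h4 : d α * ‖v i.castSucc‖ ^ 2 ≤ d i * ‖v i.castSucc‖ ^ 2 := by
        by_cases hi : α ≤ i
        · exact mul_le_mul_of_nonneg_right (hd hi) (by positivity)
        · rw [hvT i.castSucc (by simpa using hi)]; simp
      have h5 : 0 ≤ 1 / ε * (ε * ‖v i.castSucc‖ - ‖a i‖ * ‖v (Fin.last n)‖) ^ 2 := by positivity
      have h6 : 1 / ε * (ε * ‖v i.castSucc‖ - ‖a i‖ * ‖v (Fin.last n)‖) ^ 2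
          = ε * ‖v i.castSucc‖ ^ 2 - 2 * (‖v i.castSucc‖ * ‖a i‖ * ‖v (Fin.last n)‖)
            + (1 / ε * ‖a i‖ ^ 2) * ‖v (Fin.last n)‖ ^ 2 := by
        field_simp
        ring
      linarith
    rw [Finset.sum_sub_distrib, ← Finset.mul_sum, ← Finset.sum_mul, ← Finset.mul_sum] at h2
    have h7 := mul_pos hg hl
    have h8 : (d α - ε) * ∑ j, ‖v j‖ ^ 2 < lam α.castSucc * ∑ j, ‖v j‖ ^ 2 := by
      refine lt_of_lt_of_le ?_ h1
      rw [Fin.sum_univ_castSucc]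
      linarith
    exact lt_of_mul_lt_mul_right h8 hpos.le

/-- Lemma 10.3: ordered diagonal entries `d₁ ≤ … ≤ d_{n−1}`; `ε` lies in `𝓘 = (0,∞)` if all
`d_i` are equal, and in `𝓘 = (0, μ₀)` with `μ₀ = ½ min{|d_i − d_j| : d_i ≠ d_j}` otherwise.
If `𝐚` satisfies the quadratic growth condition, then `|d_α − λ_α| < ε` for `α < n` and
`0 ≤ λₙ − 𝐚 < (n−1)ε`, where `λ₁ ≤ … ≤ λₙ` are the ordered eigenvalues.
(Here the matrix has total size `n+1`, so `n-1` of the statement corresponds to `n`.) -/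
theorem stmt11 {n : ℕ} (hn : 1 ≤ n) (d : Fin n → ℝ) (a : Fin n → ℂ) (aa : ℝ)
    (hd : Monotone d)
    (hA : (arrowMatrix d a aa).IsHermitian)
    (lam : Fin (n + 1) → ℝ) (hmono : Monotone lam)
    (hperm : ∃ e : Equiv.Perm (Fin (n + 1)), ∀ k, lam k = hA.eigenvalues (e k))
    (ε : ℝ) (hε : 0 < ε)
    (hεI : (∀ i j : Fin n, d i = d j) ∨ (∀ i j : Fin n, d i ≠ d j → ε < |d i - d j| / 2))
    (hgrow : aa ≥ (1 / ε) * ∑ i, ‖a i‖ ^ 2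
        + (((n : ℝ) + 1) - 1) * ∑ i, |d i|
        + (((n : ℝ) + 1) - 2) * ε) :
    (∀ α : Fin n, |d α - lam α.castSucc| < ε) ∧
    0 ≤ lam (Fin.last n) - aa ∧
    lam (Fin.last n) - aa < (((n : ℝ) + 1) - 1) * ε := by
  obtain ⟨e, he⟩ := hperm
  have hup : ∀ α : Fin n, lam α.castSucc ≤ d α := arrow_upper d a aa hd hA lam hmono e he
  have hlo : ∀ α : Fin n, d α - ε < lam α.castSucc := by
    intro α
    apply arrow_lower hn d a aa hd hA lam hmono e he ε hε α
    have h1 : d α ≤ ∑ i, |d i| :=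
      (le_abs_self _).trans
        (Finset.single_le_sum (f := fun i => |d i|) (fun i _ => abs_nonneg _) (Finset.mem_univ α))
    have h0 : 0 ≤ ∑ i, |d i| := Finset.sum_nonneg fun i _ => abs_nonneg _
    have hn' : (1 : ℝ) ≤ n := by exact_mod_cast hn
    have h2 := mul_nonneg (sub_nonneg.2 hn') h0
    have h3 := mul_nonneg (sub_nonneg.2 hn') hε.le
    linarith
  have htr := arrow_trace d a aa hA lam e he
  rw [Fin.sum_univ_castSucc] at htr
  have hs1 : ∑ i : Fin n, lam i.castSucc ≤ ∑ i, d i := Finset.sum_le_sum fun i _ => hup i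
  have hs2 : ∑ i : Fin n, (d i - ε) < ∑ i : Fin n, lam i.castSucc :=
    Finset.sum_lt_sum_of_nonempty ⟨⟨0, hn⟩, Finset.mem_univ _⟩ fun i _ => hlo i
  rw [Finset.sum_sub_distrib] at hs2
  simp only [Finset.sum_const, Finset.card_univ, Fintype.card_fin, nsmul_eq_mul] at hs2
  refine ⟨fun α => ?_, by linarith, by linarith⟩
  rw [abs_lt]
  constructor <;> linarith [hup α, hlo α]
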